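/- For any integer k ≥ 3 and any tree T, every C_k-isolating set D of cons(T, C_k) contains at least one vertex from each C_k^+-constituent (i.e., from each set consisting of a vertex v of T together with the vertices of the copy of C_k attached to v); consequently ι(cons(T, C_k), C_k) ≥ |V(T)|. -/

import Mathlib

/-!
If a `C_k`-isolating set `D` misses the constituent of `v`, then no vertex of the cycle attached
to `v` lies in `N[D]`: all neighbours of such a vertex belong to that constituent
(`consGraph_adj_inr`). Hence the whole cycle survives the removal of `N[D]`, a contradiction.
The constituents are pairwise disjoint and one is attached to each vertex of `T`, so `D` has at
least `|V(T)|` elements.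
-/

open SimpleGraph

/-- `H` has a copy in `G`, i.e. `H` is isomorphic to a (not necessarily induced)
subgraph of `G`. -/
def HasCopy {W V : Type*} (H : SimpleGraph W) (G : SimpleGraph V) : Prop :=
  ∃ f : H →g G, Function.Injective f

/-- The closed neighbourhood `N[D]` of a set of vertices `D` in `G`. -/
def closedNbhd {V : Type*} (G : SimpleGraph V) (D : Set V) : Set V :=
  D ∪ {v | ∃ u ∈ D, G.Adj u v}

/-- `D` is an `H`-isolating set of `G`: the subgraph of `G` induced on the complement
of `N[D]` contains no copy of `H`. -/
def IsIsolating {V W : Type*} (G : SimpleGraph V) (H : SimpleGraph W) (D : Set V) : Prop :=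
  ¬ HasCopy H (G.induce (closedNbhd G D)ᶜ)

/-- The `H`-isolation number of `G`: the minimum cardinality of an `H`-isolating set. -/
noncomputable def isolNum {V W : Type*} (G : SimpleGraph V) (H : SimpleGraph W) : ℕ :=
  sInf {n | ∃ D : Set V, IsIsolating G H D ∧ D.ncard = n}

/-- `cons(T, C_k)`: from `T` and `|V(T)|` pairwise disjoint copies of the cycle `C_k`,
join each vertex of `T` to one vertex of its own copy of `C_k` by a single edge. -/
def consGraph {α : Type*} (T : SimpleGraph α) (k : ℕ) :
    SimpleGraph (α ⊕ α × Fin k) :=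
  SimpleGraph.fromRel (fun x y =>
    match x, y with
    | Sum.inl a, Sum.inl b => T.Adj a b
    | Sum.inl a, Sum.inr p => a = p.1 ∧ p.2.val = 0
    | Sum.inr p, Sum.inr q => p.1 = q.1 ∧ (cycleGraph k).Adj p.2 q.2
    | _, _ => False)

/-- `G ∈ 𝒢ₖ`: `G` is isomorphic to `cons(T, C_k)` for some tree `T`. -/
def MemG {V : Type*} (G : SimpleGraph V) (k : ℕ) : Prop :=
  ∃ (n : ℕ) (T : SimpleGraph (Fin n)), T.IsTree ∧ Nonempty (G ≃g consGraph T k)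

/-- The diamond graph `K₄⁻`, obtained from `K₄` by deleting one edge. -/
def diamondGraph : SimpleGraph (Fin 4) :=
  (completeGraph (Fin 4)).deleteEdges {s(0, 1)}

/-- `C₄⁺`: a `4`-cycle with a pendant edge attached to one of its vertices. -/
def c4plus : SimpleGraph (Fin 5) :=
  SimpleGraph.fromEdgeSet {s(0, 1), s(1, 2), s(2, 3), s(3, 0), s(0, 4)}

/-- The vertex of `T` whose constituent contains a given vertex of `consGraph T k`. -/
def constituentOf {α : Type*} {k : ℕ} : α ⊕ α × Fin k → α :=
  Sum.elim id Prod.fst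

/-- Every neighbour of a cycle vertex lies in the same constituent. -/
lemma consGraph_adj_inr {α : Type*} {T : SimpleGraph α} {k : ℕ} {x : α ⊕ α × Fin k}
    {p : α × Fin k} (h : (consGraph T k).Adj x (Sum.inr p)) : constituentOf x = p.1 := by
  rcases x with a | q
  · simp_all [consGraph, constituentOf]
  · simp only [consGraph, SimpleGraph.fromRel_adj] at h
    rcases h.2 with h | h
    · exact h.1
    · exact h.1.symm

lemma exists_mem_constituentOf {α : Type*} {T : SimpleGraph α} {k : ℕ}
    {D : Set (α ⊕ α × Fin k)} (hD : IsIsolating (consGraph T k) (cycleGraph k) D) (v : α) :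
    ∃ x ∈ D, constituentOf x = v := by
  by_contra! hv
  refine hD ⟨⟨fun i => ⟨Sum.inr (v, i), ?_⟩, ?_⟩, ?_⟩
  · rintro (h | ⟨u, hu, h⟩)
    · exact hv _ h rfl
    · exact hv u hu (consGraph_adj_inr h)
  · intro i j h
    simp [consGraph, h, h.ne]
  · intro i j h
    exact congrArg Prod.snd (Sum.inr_injective (congrArg Subtype.val h))

theorem stmt7 {α : Type*} [Fintype α] (k : ℕ) (hk : 3 ≤ k)
    (T : SimpleGraph α) (hT : T.IsTree) :
    (∀ D : Set (α ⊕ α × Fin k), IsIsolating (consGraph T k) (cycleGraph k) D →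
      ∀ v : α, ∃ x ∈ D, x = Sum.inl v ∨ ∃ i : Fin k, x = Sum.inr (v, i)) ∧
      Fintype.card α ≤ isolNum (consGraph T k) (cycleGraph k) := by
  refine ⟨fun D hD v => ?_, le_csInf ?_ ?_⟩
  · obtain ⟨x, hx, rfl⟩ := exists_mem_constituentOf hD v
    refine ⟨x, hx, ?_⟩
    rcases x with a | ⟨a, i⟩
    · exact Or.inl rfl
    · exact Or.inr ⟨i, rfl⟩
  -- The infimum is not the junk value `sInf ∅ = 0`: the set of all vertices is isolating.
  · refine ⟨_, Set.univ, ?_, rfl⟩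
    rintro ⟨f, -⟩
    exact (f ⟨0, by omega⟩).2 (Or.inl trivial)
  · rintro _ ⟨D, hD, rfl⟩
    have himage : constituentOf '' D = Set.univ :=
      Set.eq_univ_of_forall fun v => exists_mem_constituentOf hD v
    calc Fintype.card α = (constituentOf '' D).ncard := by
          rw [himage, Set.ncard_univ, Nat.card_eq_fintype_card]
      _ ≤ D.ncard := Set.ncard_image_le D.toFinite
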